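/- arXiv:1007.1232 — 7 statements merged into one kernel-verified Lean document; each statement's English description precedes it below -/
import Mathlib

section
/- The Csirmaz access structure Γ^(n) is not self-dual: for every i with 1 < i ≤ 2^k − 2, the set A_i ∪ B_{i−1} is unauthorized (A_i ∪ B_{i−1} ∉ Γ^(n)) and its complement P \ (A_i ∪ B_{i−1}) = (A \ A_i) ∪ (B \ B_{i−1}) is also unauthorized (P \ (A_i ∪ B_{i−1}) ∉ Γ^(n)). -/
/-- The data of a Csirmaz access structure on `P = {1, ..., n}` with parameter `k`:
`k` is the largest integer with `n ≥ 2^k - 2 + k`; `A ⊆ P` has `k` elements;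
`Ai 0, Ai 1, ..., Ai (2^k - 2)` enumerates all nonempty subsets of `A` in order of
non-increasing cardinality; `Bi 0 = ∅ ⊆ Bi 1 ⊆ ... ⊆ Bi (2^k - 2) = P \ A` is a
nested chain with `|Bi i| = i` for `i < 2^k - 2` (i.e. `Bi i = {b_1, ..., b_i}`). -/
structure CsirmazSetup (n k : ℕ) (A : Finset ℕ) (Ai Bi : ℕ → Finset ℕ) : Prop where
  hn : 4 ≤ n
  hk : 2 ^ k - 2 + k ≤ n
  hk_max : ∀ k' : ℕ, 2 ^ k' - 2 + k' ≤ n → k' ≤ k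
  hA_sub : A ⊆ Finset.Icc 1 n
  hA_card : A.card = k
  hA0 : Ai 0 = A
  hAi_sub : ∀ i ≤ 2 ^ k - 2, Ai i ⊆ A
  hAi_ne : ∀ i ≤ 2 ^ k - 2, (Ai i).Nonempty
  hAi_inj : ∀ i ≤ 2 ^ k - 2, ∀ j ≤ 2 ^ k - 2, Ai i = Ai j → i = j
  hAi_all : ∀ X ⊆ A, X.Nonempty → ∃ i ≤ 2 ^ k - 2, Ai i = X
  hAi_card_anti : ∀ i ≤ 2 ^ k - 2, ∀ j ≤ 2 ^ k - 2, i ≤ j → (Ai j).card ≤ (Ai i).card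
  hB0 : Bi 0 = ∅
  hB_top : Bi (2 ^ k - 2) = Finset.Icc 1 n \ A
  hB_mono : ∀ i j : ℕ, i ≤ j → j ≤ 2 ^ k - 2 → Bi i ⊆ Bi j
  hB_card : ∀ i < 2 ^ k - 2, (Bi i).card = i
  hB_range : ∀ i ≤ 2 ^ k - 2, Bi i ⊆ Finset.Icc 1 n \ A

/-- The Csirmaz access structure `Γ^(n)`: the monotone closure (inside `2^P`) of the
minimal sets `M_i = Ai i ∪ Bi i`, `0 ≤ i ≤ 2^k - 2`. -/
def CsirmazGamma (n k : ℕ) (Ai Bi : ℕ → Finset ℕ) : Set (Finset ℕ) :=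
  {Z | Z ⊆ Finset.Icc 1 n ∧ ∃ i ≤ 2 ^ k - 2, Ai i ∪ Bi i ⊆ Z}

/-- `Γ^(n)` is not self-dual: for every `1 < i ≤ 2^k - 2`, the set
`A_i ∪ B_{i-1}` is unauthorized, its complement equals `(A \ A_i) ∪ (B \ B_{i-1})`,
and the complement is also unauthorized. -/
theorem csirmaz_not_self_dual (n k : ℕ) (A : Finset ℕ) (Ai Bi : ℕ → Finset ℕ)
    (h : CsirmazSetup n k A Ai Bi) :
    (∀ i : ℕ, 1 < i → i ≤ 2 ^ k - 2 →
      Ai i ∪ Bi (i - 1) ∉ CsirmazGamma n k Ai Bi ∧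
      Finset.Icc 1 n \ (Ai i ∪ Bi (i - 1)) =
        (A \ Ai i) ∪ ((Finset.Icc 1 n \ A) \ Bi (i - 1)) ∧
      Finset.Icc 1 n \ (Ai i ∪ Bi (i - 1)) ∉ CsirmazGamma n k Ai Bi) ∧
    ¬ (∀ Z ⊆ Finset.Icc 1 n,
        (Z ∈ CsirmazGamma n k Ai Bi ↔ Finset.Icc 1 n \ Z ∉ CsirmazGamma n k Ai Bi)) := by
  have key : ∀ i : ℕ, 1 < i → i ≤ 2 ^ k - 2 →
      Ai i ∪ Bi (i - 1) ∉ CsirmazGamma n k Ai Bi ∧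
      Finset.Icc 1 n \ (Ai i ∪ Bi (i - 1)) =
        (A \ Ai i) ∪ ((Finset.Icc 1 n \ A) \ Bi (i - 1)) ∧
      Finset.Icc 1 n \ (Ai i ∪ Bi (i - 1)) ∉ CsirmazGamma n k Ai Bi := by
    intro i hi1 hi
    have hAA := h.hA_sub
    have hAi := h.hAi_sub i hi
    have hBr := h.hB_range (i - 1) (by omega)
    refine ⟨?_, ?_, ?_⟩
    · rintro ⟨-, j, hj, hsub⟩
      have hAj := h.hAi_sub j hj
      have hBj := h.hB_range j hj
      have hA' : Ai j ⊆ Ai i := by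
        intro x hx
        rcases Finset.mem_union.1 (hsub (Finset.mem_union_left _ hx)) with h1 | h1
        · exact h1
        · exact absurd (hAj hx) (Finset.mem_sdiff.1 (hBr h1)).2
      have hB' : Bi j ⊆ Bi (i - 1) := by
        intro x hx
        rcases Finset.mem_union.1 (hsub (Finset.mem_union_right _ hx)) with h1 | h1
        · exact absurd (hAi h1) (Finset.mem_sdiff.1 (hBj hx)).2
        · exact h1
      by_cases hij : i ≤ j
      · have h1 : (Bi i).card ≤ (Bi (i - 1)).card :=
          Finset.card_le_card ((h.hB_mono i j hij hj).trans hB')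
        rw [h.hB_card (i - 1) (by omega)] at h1
        rcases Nat.lt_or_ge i (2 ^ k - 2) with h2 | h2
        · rw [h.hB_card i h2] at h1
          omega
        · have h3 : i = 2 ^ k - 2 := le_antisymm hi h2
          have h4 : (Bi i).card = n - k := by
            rw [h3, h.hB_top, Finset.card_sdiff_of_subset hAA, h.hA_card, Nat.card_Icc]
            omega
          have := h.hk
          omega
      · have h1 := h.hAi_card_anti j hj i hi (by omega)
        have h2 := h.hAi_inj j hj i hi (Finset.eq_of_subset_of_card_le hA' h1)
        omega
    · ext x
      have a1 := @hAA x
      have a2 := @hAi x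
      have a3 := @hBr x
      simp only [Finset.mem_sdiff, Finset.mem_union] at *
      tauto
    · rintro ⟨-, j, hj, hsub⟩
      rcases Nat.eq_zero_or_pos j with h0 | h0
      · subst h0
        obtain ⟨x, hx⟩ := h.hAi_ne i hi
        have h1 : x ∈ Ai 0 := by rw [h.hA0]; exact hAi hx
        exact (Finset.mem_sdiff.1 (hsub (Finset.mem_union_left _ h1))).2
          (Finset.mem_union_left _ hx)
      · have h1 : (Bi 1).card = 1 := h.hB_card 1 (by omega)
        obtain ⟨x, hx⟩ := Finset.card_pos.1 (by omega : 0 < (Bi 1).card)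
        have h2 := h.hB_mono 1 j h0 hj hx
        have h3 := h.hB_mono 1 (i - 1) (by omega) (by omega) hx
        exact (Finset.mem_sdiff.1 (hsub (Finset.mem_union_right _ h2))).2
          (Finset.mem_union_right _ h3)
  refine ⟨key, fun hd => ?_⟩
  have hk2 : 2 ≤ k := h.hk_max 2 (by have := h.hn; omega)
  have hp : 2 ^ 2 ≤ 2 ^ k := Nat.pow_le_pow_right (by norm_num) hk2
  have h2 : 2 ≤ 2 ^ k - 2 := by omega
  obtain ⟨u, -, v⟩ := key 2 (by norm_num) h2
  refine u ((hd _ ?_).2 v)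
  exact Finset.union_subset ((h.hAi_sub 2 h2).trans h.hA_sub)
    ((h.hB_range (2 - 1) (by omega)).trans Finset.sdiff_subset)
end

section
/- For every i with 0 ≤ i ≤ 2^k − 3, the set A_{i+1} ∪ B_i is unauthorized in the Csirmaz access structure: no minimal authorized set M_j (0 ≤ j ≤ 2^k − 2) is contained in A_{i+1} ∪ B_i, i.e. A_{i+1} ∪ B_i ∉ Γ^(n). (Equivalently, with X_i = A ∪ B_i and Y_i = A_{i+1} ∪ B_{i+1}, both X_i and Y_i are authorized while X_i ∩ Y_i = A_{i+1} ∪ B_i is unauthorized.) -/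
/-- for `0 ≤ i ≤ 2^k - 3`, the sets `X_i = A ∪ B_i` and
`Y_i = A_{i+1} ∪ B_{i+1}` are authorized, while their intersection
`X_i ∩ Y_i = A_{i+1} ∪ B_i` is unauthorized. -/
theorem csirmaz_intersection_unauthorized (n k : ℕ) (A : Finset ℕ)
    (Ai Bi : ℕ → Finset ℕ) (h : CsirmazSetup n k A Ai Bi) :
    ∀ i : ℕ, i + 1 ≤ 2 ^ k - 2 →
      A ∪ Bi i ∈ CsirmazGamma n k Ai Bi ∧
      Ai (i + 1) ∪ Bi (i + 1) ∈ CsirmazGamma n k Ai Bi ∧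
      (A ∪ Bi i) ∩ (Ai (i + 1) ∪ Bi (i + 1)) = Ai (i + 1) ∪ Bi i ∧
      Ai (i + 1) ∪ Bi i ∉ CsirmazGamma n k Ai Bi := by
  intro i hi
  have hi' : i ≤ 2 ^ k - 2 := by omega
  have hAs := h.hAi_sub (i + 1) hi
  have hBr := h.hB_range (i + 1) hi
  have hBm := h.hB_mono i (i + 1) (by omega) hi
  have hBP : ∀ j ≤ 2 ^ k - 2, ∀ x ∈ Bi j, x ∈ Finset.Icc 1 n ∧ x ∉ A := fun j hj x hx =>
    Finset.mem_sdiff.mp (h.hB_range j hj hx)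
  refine ⟨⟨?_, 0, Nat.zero_le _, ?_⟩, ⟨?_, i + 1, hi, Finset.Subset.refl _⟩, ?_, ?_⟩
  · exact Finset.union_subset h.hA_sub (fun x hx => (hBP i hi' x hx).1)
  · rw [h.hA0, h.hB0, Finset.union_empty]
    exact Finset.subset_union_left
  · exact Finset.union_subset (hAs.trans h.hA_sub) (fun x hx => (hBP _ hi x hx).1)
  · ext x
    have h1 := @hAs x
    have h2 := @hBm x
    have h3 := hBP (i + 1) hi x
    simp only [Finset.mem_inter, Finset.mem_union]
    tauto
  · rintro ⟨-, j, hj, hsub⟩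
    have hAj : Ai j ⊆ Ai (i + 1) := by
      intro x hx
      rcases Finset.mem_union.mp (hsub (Finset.mem_union_left _ hx)) with h1 | h1
      · exact h1
      · exact absurd (h.hAi_sub j hj hx) (hBP i hi' x h1).2
    have hBj : Bi j ⊆ Bi i := by
      intro x hx
      rcases Finset.mem_union.mp (hsub (Finset.mem_union_right _ hx)) with h1 | h1
      · exact absurd (hAs h1) (hBP j hj x hx).2
      · exact h1
    rcases Nat.lt_or_ge i j with hij | hij
    · have hc := Finset.card_le_card ((h.hB_mono (i + 1) j hij hj).trans hBj)
      rw [h.hB_card i (by omega)] at hc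
      rcases Nat.lt_or_ge (i + 1) (2 ^ k - 2) with hlt | hge
      · rw [h.hB_card _ hlt] at hc
        omega
      · have he : i + 1 = 2 ^ k - 2 := by omega
        rw [he, h.hB_top, Finset.card_sdiff_of_subset h.hA_sub, h.hA_card, Nat.card_Icc] at hc
        have := h.hk
        omega
    · have hc := h.hAi_card_anti j hj (i + 1) hi (by omega)
      have := h.hAi_inj j hj (i + 1) hi (Finset.eq_of_subset_of_card_le hAj hc)
      omega
end

section
/- Let Γ be a quantum access structure on a finite player set P (monotone and with any two authorized sets intersecting), and let Γ̄ be its purification on P' = P ∪ {p}. Then: (a) Γ̄ is self-dual, i.e. for every Z ⊆ P', Z ∈ Γ̄ if and only if P' \ Z ∉ Γ̄; (b) Γ̄ is itself a quantum access structure (monotone with any two authorized sets intersecting); and (c) for every Z ⊆ P one has Z ∈ Γ̄ if and only if Z ∈ Γ (authorized sets of Γ stay authorized and unauthorized sets stay unauthorized). -/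
/-- Gottesman's purification of a monotone access structure `Γ` on `P`, adding a
new player `p`:  `Γ̄ = {Z ⊆ P ∪ {p} : Z ∩ P ∈ Γ, or (p ∈ Z and P \ Z ∉ Γ)}`. -/
def Purification (P : Finset ℕ) (p : ℕ) (Γ : Set (Finset ℕ)) : Set (Finset ℕ) :=
  {Z | Z ⊆ P ∪ {p} ∧ (Z ∩ P ∈ Γ ∨ (p ∈ Z ∧ P \ Z ∉ Γ))}

/-- the purification `Γ̄` of a quantum access structure `Γ` on `P`
(monotone, with any two authorized sets intersecting) is (a) self-dual,
(b) itself a quantum access structure, and (c) agrees with `Γ` on subsets of `P`. -/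
theorem purification_properties (P : Finset ℕ) (p : ℕ) (hp : p ∉ P)
    (Γ : Set (Finset ℕ))
    (hsub : ∀ X ∈ Γ, X ⊆ P)
    (hmono : ∀ X Y : Finset ℕ, X ∈ Γ → X ⊆ Y → Y ⊆ P → Y ∈ Γ)
    (hint : ∀ X ∈ Γ, ∀ Y ∈ Γ, (X ∩ Y).Nonempty) :
    (∀ Z ⊆ P ∪ {p},
      (Z ∈ Purification P p Γ ↔ (P ∪ {p}) \ Z ∉ Purification P p Γ)) ∧
    ((∀ X Y : Finset ℕ, X ∈ Purification P p Γ → X ⊆ Y → Y ⊆ P ∪ {p} →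
        Y ∈ Purification P p Γ) ∧
      (∀ X ∈ Purification P p Γ, ∀ Y ∈ Purification P p Γ, (X ∩ Y).Nonempty)) ∧
    (∀ Z ⊆ P, (Z ∈ Purification P p Γ ↔ Z ∈ Γ)) := by
  have hd : ∀ Z : Finset ℕ, Z ∩ P ∈ Γ → P \ Z ∈ Γ → False := by
    intro Z h1 h2
    obtain ⟨x, hx⟩ := hint _ h1 _ h2
    simp only [Finset.mem_inter, Finset.mem_sdiff] at hx
    exact hx.2.2 hx.1.1
  have hdual : ∀ Z ⊆ P ∪ {p},
      (Z ∈ Purification P p Γ ↔ (P ∪ {p}) \ Z ∉ Purification P p Γ) := by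
    intro Z hZ
    have e1 : ((P ∪ {p}) \ Z) ∩ P = P \ Z := by
      ext x
      simp only [Finset.mem_inter, Finset.mem_sdiff, Finset.mem_union]
      tauto
    have e2 : P \ ((P ∪ {p}) \ Z) = Z ∩ P := by
      ext x
      simp only [Finset.mem_inter, Finset.mem_sdiff, Finset.mem_union]
      tauto
    have e3 : p ∈ (P ∪ {p}) \ Z ↔ p ∉ Z := by simp
    have h4 : (P ∪ {p}) \ Z ⊆ P ∪ {p} := Finset.sdiff_subset
    have h5 := hd Z
    simp only [Purification, Set.mem_setOf_eq, e1, e2, e3]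
    tauto
  have hmon : ∀ X Y : Finset ℕ, X ∈ Purification P p Γ → X ⊆ Y → Y ⊆ P ∪ {p} →
        Y ∈ Purification P p Γ := by
    rintro X Y ⟨_, h | ⟨h1, h2⟩⟩ hXY hY
    · exact ⟨hY, Or.inl (hmono _ _ h (Finset.inter_subset_inter_right hXY)
        Finset.inter_subset_right)⟩
    · exact ⟨hY, Or.inr ⟨hXY h1, fun h => h2 (hmono _ _ h
        (Finset.sdiff_subset_sdiff (Finset.Subset.refl P) hXY) Finset.sdiff_subset)⟩⟩
  refine ⟨hdual, ⟨hmon, ?_⟩, ?_⟩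
  · intro X hX Y hY
    by_contra hne
    refine (hdual X hX.1).1 hX (hmon Y _ hY ?_ Finset.sdiff_subset)
    intro y hy
    refine Finset.mem_sdiff.2 ⟨hY.1 hy, fun hyX => hne ⟨y, Finset.mem_inter.2 ⟨hyX, hy⟩⟩⟩
  · intro Z hZ
    have h1 : Z ∩ P = Z := Finset.inter_eq_left.2 hZ
    have h2 : p ∉ Z := fun h => hp (hZ h)
    have h3 : Z ⊆ P ∪ {p} := hZ.trans Finset.subset_union_left
    simp only [Purification, Set.mem_setOf_eq, h1]
    tauto
end

section
/- Let S be an entropy function realizing a quantum access structure Γ on player set Q with secret size c (so the complement of every authorized set is unauthorized). Then for every authorized set A ∈ Γ, writing Ā = Q \ A: (1) S(A) = (1/2)·I(A : Ā) + c; (2) S(Ā) = (1/2)·I(A : Ā); and (3) S(A) − S(Ā) = c. -/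
/-- Information-theoretic model of a perfect quantum secret sharing scheme
(Imai et al.): an entropy function `S` on subsets of `Q ∪ {R}` realizing the
access structure `Γ` on the player set `Q` with secret size `c > 0`,
where `R ∉ Q` is the reference symbol.  The mutual information of disjoint
`X, Y` is `I(X : Y) = S X + S Y - S (X ∪ Y)`. -/
structure EntropyFn (Q : Finset ℕ) (R : ℕ) (Γ : Set (Finset ℕ)) (c : ℝ)
    (S : Finset ℕ → ℝ) : Prop where
  c_pos : 0 < c
  empty : S ∅ = 0
  nonneg : ∀ X : Finset ℕ, 0 ≤ S X
  submod : ∀ X Y : Finset ℕ, X ⊆ Q ∪ {R} → Y ⊆ Q ∪ {R} →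
    S X + S Y ≥ S (X ∪ Y) + S (X ∩ Y)
  purity : ∀ X : Finset ℕ, X ⊆ Q ∪ {R} → S X = S ((Q ∪ {R}) \ X)
  ref : S {R} = c
  recov : ∀ A ∈ Γ, S A + S {R} - S (A ∪ {R}) = 2 * c
  secrecy : ∀ A : Finset ℕ, A ⊆ Q → A ∉ Γ → S A + S {R} - S (A ∪ {R}) = 0

/-- for an entropy function realizing a quantum access structure `Γ`
with secret size `c`, every authorized `A ∈ Γ` with complement `Ā = Q \ A` satisfies
`S(A) = I(A : Ā)/2 + c`, `S(Ā) = I(A : Ā)/2`, and `S(A) - S(Ā) = c`. -/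
theorem entropy_complement_relations (Q : Finset ℕ) (R : ℕ) (hR : R ∉ Q)
    (Γ : Set (Finset ℕ)) (c : ℝ) (S : Finset ℕ → ℝ)
    (hsub : ∀ X ∈ Γ, X ⊆ Q)
    (hmono : ∀ X Y : Finset ℕ, X ∈ Γ → X ⊆ Y → Y ⊆ Q → Y ∈ Γ)
    (hint : ∀ X ∈ Γ, ∀ Y ∈ Γ, (X ∩ Y).Nonempty)
    (hS : EntropyFn Q R Γ c S) :
    ∀ A ∈ Γ,
      S A = (S A + S (Q \ A) - S (A ∪ (Q \ A))) / 2 + c ∧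
      S (Q \ A) = (S A + S (Q \ A) - S (A ∪ (Q \ A))) / 2 ∧
      S A - S (Q \ A) = c := by
  intro A hA
  have hAQ := hsub A hA
  have h1 : (Q ∪ {R}) \ (A ∪ {R}) = Q \ A := by
    ext x
    simp only [Finset.mem_sdiff, Finset.mem_union, Finset.mem_singleton]
    constructor
    · tauto
    · rintro ⟨hx, hxA⟩
      have : x ≠ R := fun h => hR (h ▸ hx)
      tauto
  have h2 : (Q ∪ {R}) \ {R} = Q := by
    ext x
    simp only [Finset.mem_sdiff, Finset.mem_union, Finset.mem_singleton]
    constructor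
    · tauto
    · intro hx
      have : x ≠ R := fun h => hR (h ▸ hx)
      tauto
  have p1 := hS.purity (A ∪ {R}) (Finset.union_subset_union_left hAQ)
  have p2 := hS.purity {R} Finset.subset_union_right
  rw [h1] at p1
  rw [h2] at p2
  have r := hS.recov A hA
  have hc := hS.ref
  rw [Finset.union_sdiff_of_subset hAQ]
  refine ⟨?_, ?_, ?_⟩ <;> linarith
end

section
/- Let S be an entropy function realizing an access structure Γ on player set Q with secret size c. If A, B ∈ Γ are two authorized sets such that A ∩ B ∉ Γ is unauthorized, then S(A) + S(B) ≥ S(A ∪ B) + S(A ∩ B) + 2c. -/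
/-- if `A, B ∈ Γ` are authorized and `A ∩ B ∉ Γ` is unauthorized, then
`S(A) + S(B) ≥ S(A ∪ B) + S(A ∩ B) + 2c`. -/
theorem entropy_submod_authorized (Q : Finset ℕ) (R : ℕ) (hR : R ∉ Q)
    (Γ : Set (Finset ℕ)) (c : ℝ) (S : Finset ℕ → ℝ)
    (hsub : ∀ X ∈ Γ, X ⊆ Q)
    (hmono : ∀ X Y : Finset ℕ, X ∈ Γ → X ⊆ Y → Y ⊆ Q → Y ∈ Γ)
    (hS : EntropyFn Q R Γ c S) :
    ∀ A ∈ Γ, ∀ B ∈ Γ, A ∩ B ∉ Γ →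
      S A + S B ≥ S (A ∪ B) + S (A ∩ B) + 2 * c := by
  intro A hA B hB hAB
  have hAQ := hsub A hA
  have hBQ := hsub B hB
  have h1 := hS.recov A hA
  have h2 := hS.recov B hB
  have h3 := hS.recov (A ∪ B) (hmono A _ hA Finset.subset_union_left (Finset.union_subset hAQ hBQ))
  have h4 := hS.secrecy (A ∩ B) (Finset.inter_subset_left.trans hAQ) hAB
  have h5 := hS.submod (A ∪ {R}) (B ∪ {R}) (Finset.union_subset_union_left hAQ)
    (Finset.union_subset_union_left hBQ)
  rw [← Finset.union_union_distrib_right, ← Finset.inter_union_distrib_right] at h5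
  have h6 := hS.ref
  linarith
end

section
/- Let n ≥ 5, let Γ^(n−1) be the Csirmaz access structure on P = {1, …, n−1} (with parameter k the largest integer such that n−1 ≥ 2^k − 2 + k), let Γ̄ be its purification on P' = P ∪ {n}, and let S be an entropy function realizing Γ̄ with secret size c. Then for every i with 0 ≤ i ≤ 2^k − 3: S(A ∪ B_i) + S(B_{i+1}) ≥ S(A ∪ B_{i+1}) + S(B_i) + 2c. -/
/-- for an entropy function realizing the purification (on
`P' = {1,…,n}`) of the Csirmaz access structure `Γ^(n-1)` on `P = {1,…,n-1}`:
`S(A ∪ B_i) + S(B_{i+1}) ≥ S(A ∪ B_{i+1}) + S(B_i) + 2c` for `0 ≤ i ≤ 2^k - 3`. -/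
theorem csirmaz_entropy_step (n k : ℕ) (hn : 5 ≤ n) (A : Finset ℕ)
    (Ai Bi : ℕ → Finset ℕ) (hcs : CsirmazSetup (n - 1) k A Ai Bi)
    (R : ℕ) (hR : R ∉ Finset.Icc 1 n) (c : ℝ) (S : Finset ℕ → ℝ)
    (hS : EntropyFn (Finset.Icc 1 n) R
      (Purification (Finset.Icc 1 (n - 1)) n (CsirmazGamma (n - 1) k Ai Bi)) c S) :
    ∀ i : ℕ, i + 1 ≤ 2 ^ k - 2 →
      S (A ∪ Bi i) + S (Bi (i + 1)) ≥ S (A ∪ Bi (i + 1)) + S (Bi i) + 2 * c := by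
  intro i hi
  have hi0 : i ≤ 2 ^ k - 2 := by omega
  have hAP := hcs.hA_sub
  have hB1 := hcs.hB_range (i + 1) hi
  have hBm := hcs.hB_mono i (i + 1) (by omega) hi
  have hA1 := hcs.hAi_sub (i + 1) hi
  have hPQ : Finset.Icc 1 (n - 1) ⊆ Finset.Icc 1 n :=
    Finset.Icc_subset_Icc_right (by omega)
  have hB1P : Bi (i + 1) ⊆ Finset.Icc 1 (n - 1) := hB1.trans Finset.sdiff_subset
  have hB0P : Bi i ⊆ Finset.Icc 1 (n - 1) := hBm.trans hB1P
  have hA1P : Ai (i + 1) ⊆ Finset.Icc 1 (n - 1) := hA1.trans hAP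
  have hdisj : Disjoint A (Bi (i + 1)) := by
    rw [Finset.disjoint_left]
    intro x hx hx'
    exact (Finset.mem_sdiff.mp (hB1 hx')).2 hx
  have hnP : n ∉ Finset.Icc 1 (n - 1) := by
    simp only [Finset.mem_Icc]
    omega
  -- authorized sets
  have auth : ∀ Z : Finset ℕ, Z ⊆ Finset.Icc 1 (n - 1) →
      (∃ j ≤ 2 ^ k - 2, Ai j ∪ Bi j ⊆ Z) → S (Z ∪ {R}) = S Z - c := by
    intro Z hZ hj
    have h := hS.recov Z ⟨hZ.trans Finset.subset_union_left, Or.inl (by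
      rw [Finset.inter_eq_left.mpr hZ]
      exact ⟨hZ, hj⟩)⟩
    rw [hS.ref] at h
    linarith
  have unauth : ∀ Z : Finset ℕ, Z ⊆ Finset.Icc 1 (n - 1) →
      (¬ ∃ j ≤ 2 ^ k - 2, Ai j ∪ Bi j ⊆ Z) → S (Z ∪ {R}) = S Z + c := by
    intro Z hZ hj
    have h := hS.secrecy Z (hZ.trans hPQ) (by
      rintro ⟨-, h | h⟩
      · rw [Finset.inter_eq_left.mpr hZ] at h
        exact hj h.2
      · exact hnP (hZ h.1))
    rw [hS.ref] at h
    linarith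
  have e1 := auth (A ∪ Bi i) (Finset.union_subset hAP hB0P)
    ⟨0, by omega, by rw [hcs.hA0, hcs.hB0, Finset.union_empty]; exact Finset.subset_union_left⟩
  have e2 := auth (A ∪ Bi (i + 1)) (Finset.union_subset hAP hB1P)
    ⟨0, by omega, by rw [hcs.hA0, hcs.hB0, Finset.union_empty]; exact Finset.subset_union_left⟩
  have e3 := auth (Ai (i + 1) ∪ Bi (i + 1)) (Finset.union_subset hA1P hB1P)
    ⟨i + 1, hi, subset_rfl⟩
  have e4 := unauth (Ai (i + 1) ∪ Bi i) (Finset.union_subset hA1P hB0P) (by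
    rintro ⟨j, hj, hsub⟩
    have hBj := hcs.hB_range j hj
    have hAj := hcs.hAi_sub j hj
    have hAA : Ai j ⊆ Ai (i + 1) := by
      intro x hx
      rcases Finset.mem_union.mp (hsub (Finset.mem_union_left _ hx)) with h | h
      · exact h
      · exact absurd (hBm h) (Finset.disjoint_left.mp hdisj (hAj hx))
    have hBB : Bi j ⊆ Bi i := by
      intro x hx
      rcases Finset.mem_union.mp (hsub (Finset.mem_union_right _ hx)) with h | h
      · exact absurd (hA1 h) (Finset.mem_sdiff.mp (hBj hx)).2
      · exact h
    have hci := hcs.hB_card i (by omega)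
    have hcj := Finset.card_le_card hBB
    have hji : j ≤ i := by
      rcases Nat.lt_or_ge j (2 ^ k - 2) with h | h
      · rw [hcs.hB_card j h] at hcj
        omega
      · have hje : j = 2 ^ k - 2 := le_antisymm hj h
        rw [hje, hcs.hB_top, Finset.card_sdiff_of_subset hAP, hcs.hA_card,
          Nat.card_Icc] at hcj
        have := hcs.hk
        omega
    have heq : Ai j = Ai (i + 1) := Finset.eq_of_subset_of_card_le hAA
      (hcs.hAi_card_anti j hj (i + 1) hi (by omega))
    have := hcs.hAi_inj j hj (i + 1) hi heq
    omega)
  have s1 := hS.submod (A ∪ Bi i ∪ {R}) (Ai (i + 1) ∪ Bi (i + 1) ∪ {R})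
    (Finset.union_subset_union_left ((Finset.union_subset hAP hB0P).trans hPQ))
    (Finset.union_subset_union_left ((Finset.union_subset hA1P hB1P).trans hPQ))
  have s2 := hS.submod (Ai (i + 1) ∪ Bi i) (Bi (i + 1))
    (((Finset.union_subset hA1P hB0P).trans hPQ).trans Finset.subset_union_left)
    ((hB1P.trans hPQ).trans Finset.subset_union_left)
  have hd : ∀ x, x ∈ A → x ∉ Bi (i + 1) := fun x hx => Finset.disjoint_left.mp hdisj hx
  have u1 : (A ∪ Bi i ∪ {R}) ∪ (Ai (i + 1) ∪ Bi (i + 1) ∪ {R}) = A ∪ Bi (i + 1) ∪ {R} := by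
    ext x
    have h1 := @hA1 x
    have h2 := @hBm x
    simp only [Finset.mem_union]
    tauto
  have u2 : (A ∪ Bi i ∪ {R}) ∩ (Ai (i + 1) ∪ Bi (i + 1) ∪ {R}) = Ai (i + 1) ∪ Bi i ∪ {R} := by
    ext x
    have h1 := @hA1 x
    have h2 := @hBm x
    have h3 := hd x
    simp only [Finset.mem_union, Finset.mem_inter]
    tauto
  have u3 : (Ai (i + 1) ∪ Bi i) ∪ Bi (i + 1) = Ai (i + 1) ∪ Bi (i + 1) := by
    ext x
    have h2 := @hBm x
    simp only [Finset.mem_union]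
    tauto
  have u4 : (Ai (i + 1) ∪ Bi i) ∩ Bi (i + 1) = Bi i := by
    ext x
    have h1 := @hA1 x
    have h2 := @hBm x
    have h3 := hd x
    simp only [Finset.mem_union, Finset.mem_inter]
    tauto
  rw [u1, u2, e1, e2, e3, e4] at s1
  rw [u3, u4] at s2
  linarith
end

section
/- Let S be an entropy function realizing the access structure Γ̄^(4) on players {1,2,3,4,5} with secret size c. Then S({1,2}) + S({3,4}) ≥ S({1,2,3,4}) + 4c. -/
/-- The purified access structure `Γ̄^(4)` on the five players `{1,2,3,4,5}`:
the monotone closure of the minimal sets `{1,2}, {1,3}, {2,3,4}, {2,3,5}, {1,4,5}`. -/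
def GammaBar4 : Set (Finset ℕ) :=
  {Z | Z ⊆ ({1, 2, 3, 4, 5} : Finset ℕ) ∧
    (({1, 2} : Finset ℕ) ⊆ Z ∨ ({1, 3} : Finset ℕ) ⊆ Z ∨ ({2, 3, 4} : Finset ℕ) ⊆ Z ∨
      ({2, 3, 5} : Finset ℕ) ⊆ Z ∨ ({1, 4, 5} : Finset ℕ) ⊆ Z)}

/-- for an entropy function realizing `Γ̄^(4)` with secret size `c`:
`S({1,2}) + S({3,4}) ≥ S({1,2,3,4}) + 4c`. -/
theorem gammaBar4_pair_bound (R : ℕ) (hR : R ∉ ({1, 2, 3, 4, 5} : Finset ℕ))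
    (c : ℝ) (S : Finset ℕ → ℝ)
    (hS : EntropyFn ({1, 2, 3, 4, 5} : Finset ℕ) R GammaBar4 c S) :
    S {1, 2} + S {3, 4} ≥ S {1, 2, 3, 4} + 4 * c := by
  have hRne : R ≠ 1 ∧ R ≠ 2 ∧ R ≠ 3 ∧ R ≠ 4 ∧ R ≠ 5 := by simpa using hR
  obtain ⟨r1, r2, r3, r4, r5⟩ := hRne
  have pur : ∀ A B : Finset ℕ, A ⊆ ({1, 2, 3, 4, 5} : Finset ℕ) →
      ({1, 2, 3, 4, 5} : Finset ℕ) \ A = B → S A = S (B ∪ {R}) := by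
    intro A B hA hB
    rw [hS.purity A (hA.trans Finset.subset_union_left), ← hB]
    congr 1
    ext x
    have hRA : R ∉ A := fun h => hR (hA h)
    by_cases hx : x = R
    · subst hx
      simp [hRA]
    · simp only [Finset.mem_union, Finset.mem_sdiff, Finset.mem_singleton, hx, or_false]
  have sec : ∀ A : Finset ℕ, A ⊆ ({1, 2, 3, 4, 5} : Finset ℕ) → A ∉ GammaBar4 →
      S (A ∪ {R}) = S A + c := by
    intro A hA hn
    have := hS.secrecy A hA hn
    rw [hS.ref] at this
    linarith
  have sub : ∀ X Y U I : Finset ℕ, X ⊆ ({1, 2, 3, 4, 5} : Finset ℕ) →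
      Y ⊆ ({1, 2, 3, 4, 5} : Finset ℕ) → X ∪ Y = U → X ∩ Y = I →
      S X + S Y ≥ S U + S I := by
    intro X Y U I hX hY hU hI
    subst hU hI
    exact hS.submod X Y (hX.trans Finset.subset_union_left) (hY.trans Finset.subset_union_left)
  have subR : ∀ X Y U I : Finset ℕ, X ⊆ ({1, 2, 3, 4, 5} : Finset ℕ) →
      Y ⊆ ({1, 2, 3, 4, 5} : Finset ℕ) → X ∪ Y = U → X ∩ Y = I →
      S (X ∪ {R}) + S (Y ∪ {R}) ≥ S (U ∪ {R}) + S (I ∪ {R}) := by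
    intro X Y U I hX hY hU hI
    subst hU hI
    have h := hS.submod (X ∪ {R}) (Y ∪ {R}) (Finset.union_subset_union_left hX)
      (Finset.union_subset_union_left hY)
    rwa [← Finset.union_union_distrib_right, ← Finset.inter_union_distrib_right] at h
  have s23 := sec {2, 3} (by decide) (by unfold GammaBar4; simp only [Set.mem_ofPred_eq]; decide)
  have s15 := sec {1, 5} (by decide) (by unfold GammaBar4; simp only [Set.mem_ofPred_eq]; decide)
  have s245 := sec {2, 4, 5} (by decide)
    (by unfold GammaBar4; simp only [Set.mem_ofPred_eq]; decide)
  have s345 := sec {3, 4, 5} (by decide)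
    (by unfold GammaBar4; simp only [Set.mem_ofPred_eq]; decide)
  have s5 := sec {5} (by decide) (by unfold GammaBar4; simp only [Set.mem_ofPred_eq]; decide)
  have s1 := sec {1} (by decide) (by unfold GammaBar4; simp only [Set.mem_ofPred_eq]; decide)
  have p145 := pur {1, 4, 5} {2, 3} (by decide) (by decide)
  have p234 := pur {2, 3, 4} {1, 5} (by decide) (by decide)
  have p13 := pur {1, 3} {2, 4, 5} (by decide) (by decide)
  have p12 := pur {1, 2} {3, 4, 5} (by decide) (by decide)
  have p1234 := pur {1, 2, 3, 4} {5} (by decide) (by decide)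
  have p345 := pur {3, 4, 5} {1, 2} (by decide) (by decide)
  have p245 := pur {2, 4, 5} {1, 3} (by decide) (by decide)
  have p45 := pur {4, 5} {1, 2, 3} (by decide) (by decide)
  have ha := sub {1, 5} {4, 5} {1, 4, 5} {5} (by decide) (by decide) (by decide) (by decide)
  have hb := sub {2, 3} {3, 4} {2, 3, 4} {3} (by decide) (by decide) (by decide) (by decide)
  have hc := sub {1} {3} {1, 3} ∅ (by decide) (by decide) (by decide) (by decide)
  have hd := subR {1, 2} {1, 3} {1, 2, 3} {1} (by decide) (by decide) (by decide) (by decide)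
  have h0 := hS.empty
  linarith
end
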